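/- arXiv:2602.04024 — 9 statements merged into one kernel-verified Lean document; each statement's English description precedes it below -/
import Mathlib

section
/- For every j ∈ {1,…,n} one has the identity ∑_{l=j}^{n} p̂_l · (ω_l − ∑_{i∈D_l} p_i ω_i) = ∑_{l∈S_j} p̂_l ω_l; equivalently, writing ω̃_l := ω_l − ∑_{i∈D_l} p_i ω_i, the transformed weights satisfy ∑_{l=j}^{n} (p̂_l/p̂_j) ω̃_l = ∑_{l∈S_j} (p̂_l/p̂_j) ω_l. -/
/-!
Since `p i * phat (anc i) = phat i`, expanding the left-hand side subtracts `phat i * ω i` once for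
every node `i` whose ancestor lies in `{j,…,n}`. Such an `i` satisfies `j ≤ anc i < i`, so it is
itself one of the nodes `j,…,n`. What survives is the sum over the nodes `i ∈ {j,…,n}` with
`anc i < j`, and this set is `S j`.
-/

/-- For every `j ∈ {1,…,n}`:
`∑_{l=j}^{n} p̂_l (ω_l − ∑_{i∈D_l} p_i ω_i) = ∑_{l∈S_j} p̂_l ω_l`. -/
theorem tree_delta_identity
    (n : ℕ) (hn : 1 ≤ n) (anc : ℕ → ℕ)
    (hanc1 : anc 1 = 0) (hanc : ∀ j ∈ Finset.Icc 2 n, anc j < j)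
    (S D : ℕ → Finset ℕ)
    (hS : ∀ j, S j = insert j ((Finset.Icc (j + 1) n).filter fun i => anc i < j))
    (hD : ∀ j, D j = (Finset.Icc 1 n).filter fun i => anc i = j)
    (p phat : ℕ → ℝ)
    (hp : ∀ j ∈ Finset.Icc 2 n, 0 < p j)
    (hphat1 : phat 1 = 1)
    (hphat : ∀ j ∈ Finset.Icc 2 n, phat j = p j * phat (anc j))
    (hphatpos : ∀ j ∈ Finset.Icc 1 n, 0 < phat j)
    (ω : ℕ → ℝ) :
    ∀ j ∈ Finset.Icc 1 n,
      ∑ l ∈ Finset.Icc j n, phat l * (ω l - ∑ i ∈ D l, p i * ω i)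
        = ∑ l ∈ S j, phat l * ω l := by
  intro j hj
  obtain ⟨hj1, hjn⟩ := Finset.mem_Icc.mp hj
  have hSj : S j = (Finset.Icc j n).filter fun i => ¬ j ≤ anc i := by
    rw [hS]
    ext i
    simp only [Finset.mem_insert, Finset.mem_filter, Finset.mem_Icc, not_le]
    constructor
    · rintro (rfl | h)
      · refine ⟨⟨le_rfl, hjn⟩, ?_⟩
        -- The root is covered by `anc 1 = 0`, every other node by `anc i < i`.
        rcases hj1.eq_or_lt with h | h
        · subst h; omega
        · exact hanc _ (Finset.mem_Icc.mpr ⟨h, hjn⟩)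
      · omega
    · omega
  have hinner : ∀ l ∈ Finset.Icc j n, phat l * ∑ i ∈ D l, p i * ω i
      = ∑ i ∈ ((Finset.Icc j n).filter fun i => j ≤ anc i) with anc i = l, phat i * ω i := by
    intro l hl
    obtain ⟨hjl, hln⟩ := Finset.mem_Icc.mp hl
    -- A child of `l ≥ 1` is not the root, so its index exceeds that of its ancestor.
    have key : ∀ i, 1 ≤ i → i ≤ n → anc i = l → 2 ≤ i ∧ l < i := by
      intro i h1 h2 h3
      have h4 : 2 ≤ i := by
        rcases h1.eq_or_lt with h | h
        · subst h; omega
        · exact h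
      have := hanc i (Finset.mem_Icc.mpr ⟨h4, h2⟩)
      omega
    have hDl : D l = ((Finset.Icc j n).filter fun i => j ≤ anc i).filter fun i => anc i = l := by
      rw [hD]
      ext i
      simp only [Finset.mem_filter, Finset.mem_Icc]
      constructor
      · rintro ⟨⟨h1, h2⟩, h3⟩
        have := key i h1 h2 h3
        omega
      · omega
    rw [← hDl, Finset.mul_sum]
    refine Finset.sum_congr rfl fun i hi => ?_
    rw [hD, Finset.mem_filter, Finset.mem_Icc] at hi
    obtain ⟨⟨h1, h2⟩, h3⟩ := hi
    rw [hphat i (Finset.mem_Icc.mpr ⟨(key i h1 h2 h3).1, h2⟩), h3]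
    ring
  have hmaps : ∀ i ∈ (Finset.Icc j n).filter (fun i => j ≤ anc i), anc i ∈ Finset.Icc j n := by
    intro i hi
    simp only [Finset.mem_filter, Finset.mem_Icc] at hi ⊢
    have h2 : 2 ≤ i := by
      by_contra h
      have : i = 1 := by omega
      subst this
      omega
    have := hanc i (Finset.mem_Icc.mpr ⟨h2, hi.1.2⟩)
    omega
  simp only [mul_sub, Finset.sum_sub_distrib]
  rw [Finset.sum_congr rfl hinner, Finset.sum_fiberwise_of_maps_to hmaps, hSj,
    ← Finset.sum_filter_add_sum_filter_not (Finset.Icc j n) (fun i => j ≤ anc i)]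
  ring
end

section
/- For every j ∈ {1,…,n−1} one has the identity ∑_{l=j+1}^{n} (r_{l−1}/p̂_{l−1} − r_l/p̂_l) · ∑_{i∈S_l} p̂_i ω_i = ∑_{i=j+1}^{n} (r_{m(i)}/p̂_{m(i)} − r_i/p̂_i) · p̂_i ω_i, where m(i) := max(j, anc(i)). -/
/-!
Exchange the order of summation. For `l, i ∈ {j+1,…,n}` one has `i ∈ S l` iff
`anc i < l ≤ i` (the case `l = i` uses `anc i < i`), and every element of `S l` is at least
`l ≥ j + 1`. So `p̂_i ω_i` is collected with the coefficients of exactly those `l` with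
`max j (anc i) < l ≤ i`, and these telescope (`sum_Ioc_pred_sub`).
-/

theorem sum_Ioc_pred_sub (f : ℕ → ℝ) {a b : ℕ} (h : a ≤ b) :
    ∑ l ∈ Finset.Ioc a b, (f (l - 1) - f l) = f a - f b := by
  induction b, h using Nat.le_induction with
  | base => simp
  | succ b hb ih =>
    rw [← Finset.insert_Ioc_right_eq_Ioc_add_one hb, Finset.sum_insert (by simp), ih]
    simp


/-- For every `j ∈ {1,…,n−1}`:
`∑_{l=j+1}^{n} (r_{l−1}/p̂_{l−1} − r_l/p̂_l) ∑_{i∈S_l} p̂_i ω_i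
  = ∑_{i=j+1}^{n} (r_{m(i)}/p̂_{m(i)} − r_i/p̂_i) p̂_i ω_i`, where `m i = max j (anc i)`. -/
theorem tree_kappa_identity
    (n : ℕ) (hn : 1 ≤ n) (anc : ℕ → ℕ)
    (hanc1 : anc 1 = 0) (hanc : ∀ j ∈ Finset.Icc 2 n, anc j < j)
    (S D : ℕ → Finset ℕ)
    (hS : ∀ j, S j = insert j ((Finset.Icc (j + 1) n).filter fun i => anc i < j))
    (hD : ∀ j, D j = (Finset.Icc 1 n).filter fun i => anc i = j)
    (phat : ℕ → ℝ) (hphatpos : ∀ j ∈ Finset.Icc 1 n, 0 < phat j)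
    (r : ℕ → ℝ) (ω : ℕ → ℝ) :
    ∀ j ∈ Finset.Icc 1 (n - 1),
      ∑ l ∈ Finset.Icc (j + 1) n,
          (r (l - 1) / phat (l - 1) - r l / phat l) * ∑ i ∈ S l, phat i * ω i
        = ∑ i ∈ Finset.Icc (j + 1) n,
            (r (max j (anc i)) / phat (max j (anc i)) - r i / phat i) * (phat i * ω i) := by
  intro j hj
  simp only [Finset.mem_Icc] at hj hanc
  simp only [Finset.mul_sum]
  rw [Finset.sum_comm' (t' := Finset.Icc (j + 1) n)
    (s' := fun i => Finset.Ioc (max j (anc i)) i)]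
  · refine Finset.sum_congr rfl fun i hi => ?_
    rw [Finset.mem_Icc] at hi
    have hi' := hanc i (by omega)
    rw [← Finset.sum_mul, sum_Ioc_pred_sub (fun l => r l / phat l) (by omega)]
  · intro l i
    have hi' := hanc i
    simp only [hS, Finset.mem_insert, Finset.mem_filter, Finset.mem_Icc, Finset.mem_Ioc]
    constructor
    · rintro ⟨hl, rfl | hi⟩
      · have := hi' (by omega)
        omega
      · omega
    · rintro ⟨hl, hi⟩
      omega
end

section
/- For every j ∈ {1,…,n−1} one has the telescoping identity ∑_{l=j+1}^{n} (r_{l−1}/p̂_{l−1} − r_l/p̂_l) · ∑_{i∈S_l} p̂_i w_i − (r_j/p̂_j) · ∑_{l∈S_{j+1}} p̂_l w_l = ∑_{l=j+1}^{n} (r_l/p̂_l) · ∑_{m∈D_l} p̂_m w_m − ∑_{l=j+1}^{n} r_l w_l. -/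
/-!
Write `q l = r l / phat l` and let `B l` be the sum of `phat i * w i` over the nodes `i` with
`anc i < l ≤ i ≤ n`. For `1 ≤ l ≤ n` this is the sum over `S l`, while `B (n + 1) = 0`.
Summation by parts (`summation_by_parts`) moves the differences from `q` to `B`, and the boundary
term at `n` vanishes. Passing from `l` to `l + 1` removes the node `l` and adds its children `D l`
(all of which have index greater than `l`), so `B (l + 1) - B l` is the sum over `D l` minus
`phat l * w l` (`cut_sum_step`); multiplying by `q l` gives the right-hand side.
-/

/-- Abel summation with shifted indices, keeping the boundary terms at both ends. -/
lemma summation_by_parts (q B : ℕ → ℝ) (j m : ℕ) (hjm : j ≤ m) :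
    (∑ l ∈ Finset.Icc (j + 1) m, (q (l - 1) - q l) * B l) - q j * B (j + 1)
      = (∑ l ∈ Finset.Icc (j + 1) m, q l * (B (l + 1) - B l)) - q m * B (m + 1) := by
  induction m, hjm using Nat.le_induction with
  | base => simp
  | succ m hm ih =>
    rw [Finset.sum_Icc_succ_top (by omega), Finset.sum_Icc_succ_top (by omega),
      Nat.add_sub_cancel]
    linarith

/-- Moving the cut from `l` to `l + 1` replaces the node `l` by its children. -/
lemma cut_sum_step (n : ℕ) (anc : ℕ → ℕ) (hanc : ∀ i ∈ Finset.Icc 1 n, anc i < i)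
    (f : ℕ → ℝ) (l : ℕ) (hl : l ∈ Finset.Icc 1 n) :
    (∑ i ∈ (Finset.Icc (l + 1) n).filter (fun i => anc i < l + 1), f i)
        - ∑ i ∈ (Finset.Icc l n).filter (fun i => anc i < l), f i
      = (∑ i ∈ (Finset.Icc 1 n).filter (fun i => anc i = l), f i) - f l := by
  -- Both sides count the next cut together with the node `l`.
  have h1 : insert l ((Finset.Icc (l + 1) n).filter (fun i => anc i < l + 1))
      = (Finset.Icc l n).filter (fun i => anc i < l)
        ∪ (Finset.Icc 1 n).filter (fun i => anc i = l) := by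
    ext i
    have hi := hanc i
    simp only [Finset.mem_Icc, Finset.mem_insert, Finset.mem_filter, Finset.mem_union] at hi hl ⊢
    grind
  have h2 : Disjoint ((Finset.Icc l n).filter (fun i => anc i < l))
      ((Finset.Icc 1 n).filter (fun i => anc i = l)) := by
    rw [Finset.disjoint_left]
    intro i hi hi'
    simp only [Finset.mem_filter] at hi hi'
    omega
  have h3 := congrArg (fun s => ∑ i ∈ s, f i) h1
  rw [Finset.sum_union h2, Finset.sum_insert (by simp)] at h3
  linarith


/-- For every `j ∈ {1,…,n−1}` the telescoping identity
`∑_{l=j+1}^{n} (r_{l−1}/p̂_{l−1} − r_l/p̂_l) ∑_{i∈S_l} p̂_i w_i − (r_j/p̂_j) ∑_{l∈S_{j+1}} p̂_l w_l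
  = ∑_{l=j+1}^{n} (r_l/p̂_l) ∑_{m∈D_l} p̂_m w_m − ∑_{l=j+1}^{n} r_l w_l` holds. -/
theorem tree_telescoping_identity
    (n : ℕ) (hn : 1 ≤ n) (anc : ℕ → ℕ)
    (hanc1 : anc 1 = 0) (hanc : ∀ j ∈ Finset.Icc 2 n, anc j < j)
    (S D : ℕ → Finset ℕ)
    (hS : ∀ j, S j = insert j ((Finset.Icc (j + 1) n).filter fun i => anc i < j))
    (hD : ∀ j, D j = (Finset.Icc 1 n).filter fun i => anc i = j)
    (phat : ℕ → ℝ) (hphatpos : ∀ j ∈ Finset.Icc 1 n, 0 < phat j)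
    (r : ℕ → ℝ) (w : ℕ → ℝ) :
    ∀ j ∈ Finset.Icc 1 (n - 1),
      (∑ l ∈ Finset.Icc (j + 1) n,
          (r (l - 1) / phat (l - 1) - r l / phat l) * ∑ i ∈ S l, phat i * w i)
        - (r j / phat j) * ∑ l ∈ S (j + 1), phat l * w l
      = (∑ l ∈ Finset.Icc (j + 1) n, (r l / phat l) * ∑ m ∈ D l, phat m * w m)
        - ∑ l ∈ Finset.Icc (j + 1) n, r l * w l := by
  intro j hj
  rw [Finset.mem_Icc] at hj
  have hlt : ∀ i ∈ Finset.Icc 1 n, anc i < i := by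
    intro i hi
    rw [Finset.mem_Icc] at hi
    rcases Nat.lt_or_ge i 2 with h | h
    · obtain rfl : i = 1 := by omega
      omega
    · exact hanc i (Finset.mem_Icc.2 ⟨h, hi.2⟩)
  set B : ℕ → ℝ := fun l =>
    ∑ i ∈ (Finset.Icc l n).filter (fun i => anc i < l), phat i * w i with hB
  have hSB : ∀ l ∈ Finset.Icc 1 n, ∑ i ∈ S l, phat i * w i = B l := by
    intro l hl
    have hal := hlt l hl
    have hset : S l = (Finset.Icc l n).filter (fun i => anc i < l) := by
      rw [hS]
      ext i
      simp only [Finset.mem_Icc, Finset.mem_insert, Finset.mem_filter] at hl ⊢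
      grind
    rw [hset]
  have hBn : B (n + 1) = 0 := by simp [hB]
  have habel := summation_by_parts (fun l => r l / phat l) B j n (by omega)
  simp only [hBn, mul_zero, sub_zero] at habel
  rw [hSB (j + 1) (Finset.mem_Icc.2 ⟨by omega, by omega⟩), ← Finset.sum_sub_distrib]
  have hleft : ∀ l ∈ Finset.Icc (j + 1) n,
      (r (l - 1) / phat (l - 1) - r l / phat l) * ∑ i ∈ S l, phat i * w i
        = (r (l - 1) / phat (l - 1) - r l / phat l) * B l := by
    intro l hl
    rw [Finset.mem_Icc] at hl
    rw [hSB l (Finset.mem_Icc.2 ⟨by omega, hl.2⟩)]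
  rw [Finset.sum_congr rfl hleft, habel]
  refine Finset.sum_congr rfl fun l hl => ?_
  rw [Finset.mem_Icc] at hl
  have hl1 : l ∈ Finset.Icc 1 n := Finset.mem_Icc.2 ⟨by omega, hl.2⟩
  have hp := (hphatpos l hl1).ne'
  rw [hD, show B (l + 1) - B l = _ from cut_sum_step n anc hlt (fun i => phat i * w i) l hl1]
  field_simp
end

section
/- For an interval I = {q,…,Q} ⊆ {1,…,n} one has the identity ∑_{l=q+1}^{Q} (𝔯_{l−1}/p̂_{l−1} − 𝔯_l/p̂_l) · ∑_{i∈S_l∩I} p̂_i ω_i − (𝔯_q/p̂_q) · ∑_{l∈S_q∩I} p̂_l ω_l = ∑_{l=q}^{Q} (𝔯_l/p̂_l) · ∑_{m∈D_l∩I} p̂_m ω_m − ∑_{l=q}^{Q} 𝔯_l ω_l. -/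
/-!
Write `a l = 𝔯 l / p̂ l` and `T l = ∑ i ∈ S l ∩ I, p̂ i * ω i`. The left-hand side is, by summation
by parts, `∑_{q ≤ l < Q} a l * (T (l + 1) - T l) - a Q * T Q`. Since every ancestor precedes its
descendants, passing from `S l` to `S (l + 1)` removes `l` and adds exactly the children `D l`, so
`T (l + 1) - T l = ∑ m ∈ D l ∩ I, p̂ m * ω m - p̂ l * ω l`. At the right end of `I` one has
`S Q ∩ I = {Q}` and `D Q ∩ I = ∅`, and `a l * p̂ l = 𝔯 l` finishes the computation.
-/


/-- For an interval `I = {q,…,Q} ⊆ {1,…,n}`: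
`∑_{l=q+1}^{Q} (𝔯_{l−1}/p̂_{l−1} − 𝔯_l/p̂_l) ∑_{i∈S_l∩I} p̂_i ω_i
   − (𝔯_q/p̂_q) ∑_{l∈S_q∩I} p̂_l ω_l
 = ∑_{l=q}^{Q} (𝔯_l/p̂_l) ∑_{m∈D_l∩I} p̂_m ω_m − ∑_{l=q}^{Q} 𝔯_l ω_l`. -/
theorem tree_class_identity
    (n q Q : ℕ) (hq : 1 ≤ q) (hqQ : q ≤ Q) (hQn : Q ≤ n)
    (anc : ℕ → ℕ)
    (hanc1 : anc 1 = 0) (hanc : ∀ j ∈ Finset.Icc 2 n, anc j < j)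
    (S D : ℕ → Finset ℕ)
    (hS : ∀ j, S j = insert j ((Finset.Icc (j + 1) n).filter fun i => anc i < j))
    (hD : ∀ j, D j = (Finset.Icc 1 n).filter fun i => anc i = j)
    (phat : ℕ → ℝ) (hphatpos : ∀ j ∈ Finset.Icc 1 n, 0 < phat j)
    (rfrak : ℕ → ℝ) (ω : ℕ → ℝ) :
    (∑ l ∈ Finset.Icc (q + 1) Q,
        (rfrak (l - 1) / phat (l - 1) - rfrak l / phat l)
          * ∑ i ∈ S l ∩ Finset.Icc q Q, phat i * ω i)
      - (rfrak q / phat q) * ∑ l ∈ S q ∩ Finset.Icc q Q, phat l * ω l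
    = (∑ l ∈ Finset.Icc q Q, (rfrak l / phat l) * ∑ m ∈ D l ∩ Finset.Icc q Q, phat m * ω m)
      - ∑ l ∈ Finset.Icc q Q, rfrak l * ω l := by
  have hlt : ∀ i, 1 ≤ i → i ≤ n → anc i < i := by
    intro i h1 hn
    rcases Nat.lt_or_ge 1 i with h | h
    · exact hanc i (Finset.mem_Icc.2 ⟨h, hn⟩)
    · have : i = 1 := by omega
      subst this
      omega
  -- One step along the interval: `S (l + 1)` with `l` added back is the disjoint union of `S l`
  -- and `D l`.
  have step : ∀ l, q ≤ l → l < Q →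
      (∑ i ∈ S (l + 1) ∩ Finset.Icc q Q, phat i * ω i) + phat l * ω l
        = (∑ i ∈ S l ∩ Finset.Icc q Q, phat i * ω i)
          + ∑ i ∈ D l ∩ Finset.Icc q Q, phat i * ω i := by
    intro l hql hlQ
    have hnot : l ∉ S (l + 1) ∩ Finset.Icc q Q := by
      simp [hS]
    have hdisj : Disjoint (S l ∩ Finset.Icc q Q) (D l ∩ Finset.Icc q Q) := by
      rw [Finset.disjoint_left]
      intro i hi hi'
      simp only [hS, hD, Finset.mem_inter, Finset.mem_insert, Finset.mem_filter,
        Finset.mem_Icc] at hi hi'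
      have := hlt i (by omega) (by omega)
      omega
    rw [add_comm, ← Finset.sum_insert (f := fun i => phat i * ω i) hnot,
      ← Finset.sum_union hdisj]
    congr 1
    ext i
    simp only [hS, hD, Finset.mem_inter, Finset.mem_insert, Finset.mem_filter,
      Finset.mem_Icc, Finset.mem_union]
    by_cases hi : 1 ≤ i ∧ i ≤ n
    · have := hlt i hi.1 hi.2
      omega
    · omega
  have hSQ : S Q ∩ Finset.Icc q Q = {Q} := by
    ext i
    simp only [hS, Finset.mem_inter, Finset.mem_insert, Finset.mem_filter, Finset.mem_Icc,
      Finset.mem_singleton]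
    omega
  have hDQ : D Q ∩ Finset.Icc q Q = ∅ := by
    ext i
    simp only [hD, Finset.mem_inter, Finset.mem_filter, Finset.mem_Icc, Finset.notMem_empty,
      iff_false]
    intro h
    have := hlt i h.1.1.1 h.1.1.2
    omega
  have hcancel : ∀ l, q ≤ l → l ≤ Q → rfrak l / phat l * phat l = rfrak l := fun l h1 h2 =>
    div_mul_cancel₀ _ (hphatpos l (Finset.mem_Icc.2 ⟨by omega, by omega⟩)).ne'
  -- Summation by parts up to an arbitrary `M` in the interval.
  have key : ∀ M, q ≤ M → M ≤ Q →
      (∑ l ∈ Finset.Icc (q + 1) M,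
        (rfrak (l - 1) / phat (l - 1) - rfrak l / phat l)
          * ∑ i ∈ S l ∩ Finset.Icc q Q, phat i * ω i)
      - (rfrak q / phat q) * ∑ l ∈ S q ∩ Finset.Icc q Q, phat l * ω l
      = (∑ l ∈ Finset.Ico q M, (rfrak l / phat l) * ∑ m ∈ D l ∩ Finset.Icc q Q, phat m * ω m)
        - (∑ l ∈ Finset.Ico q M, rfrak l * ω l)
        - (rfrak M / phat M) * ∑ l ∈ S M ∩ Finset.Icc q Q, phat l * ω l := by
    intro M hM
    induction M, hM using Nat.le_induction with
    | base => intro _; simp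
    | succ M hM ih =>
      intro hMQ
      rw [Finset.sum_Icc_succ_top (by omega), Finset.sum_Ico_succ_top hM,
        Finset.sum_Ico_succ_top hM, Nat.add_sub_cancel]
      linear_combination ih (by omega) + rfrak M / phat M * step M hM (by omega)
        - ω M * hcancel M hM (by omega)
  rw [key Q hqQ le_rfl, hSQ, Finset.sum_singleton, ← Finset.Ico_insert_right hqQ,
    Finset.sum_insert Finset.right_notMem_Ico, Finset.sum_insert Finset.right_notMem_Ico,
    Finset.Ico_insert_right hqQ, hDQ, Finset.sum_empty]
  linear_combination - ω Q * hcancel Q hqQ le_rfl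
end

section
/- Let ω : ℝ → [0,∞)^n with ω(s) → ω* as s → ∞ for some ω* ∈ [0,∞)^n, suppose 𝒜(ω(s)) ≠ 0 for all s, and suppose 𝒜(ω*) = 0. Then 𝒞(ω(s))/𝒜(ω(s)) → 1/(𝔯_q + αC p̂_q^α h(ω*)^{α−1}) as s → ∞, a limit lying in (0,∞). -/
/-!
Put `G x = r x + K x ^ α` and let `a = Ψ⁻¹(F(ω(s)))`, `b = h(ω(s))`, `c = h(ω*)`. Since `Ψ a = F(ω(s))`,
the ratio `𝒞/𝒜` is `(a - b) / (G a - G b)`, and `𝒜(ω*) = 0` says that `F(ω*) = G c`. The linear part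
of `G` makes it expanding, `r |x - y| ≤ |G x - G y|` on `[0,∞)` (`expanding`), so `G a → G c` forces
`a → c`; also `b → c` by continuity of `h`. Because `α > 1`, `G` is `C¹` on all of `ℝ`, even at `0`, hence
strictly differentiable at `c` (`strictDeriv`): difference quotients over pairs tending to `(c, c)` tend
to `G' c`, which is positive. Inverting gives the limit.
-/

open Filter

theorem expanding {r K α x y : ℝ} (hK : 0 ≤ K) (hα : 0 ≤ α) (hx : 0 ≤ x) (hy : 0 ≤ y) :
    r * |x - y| ≤ |(r * x + K * x ^ α) - (r * y + K * y ^ α)| := by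
  wlog h : y ≤ x generalizing x y
  · rw [abs_sub_comm x y, abs_sub_comm (r * x + K * x ^ α)]
    exact this hy hx (le_of_not_ge h)
  have h1 : K * y ^ α ≤ K * x ^ α := by gcongr
  rw [abs_of_nonneg (sub_nonneg.2 h)]
  refine le_trans ?_ (le_abs_self _)
  linarith

/-- The point `c = 0` is included: `Real.rpow` extends `x ^ α` to negative `x` in a `C¹` way when `1 < α`,
so a two-sided strict derivative is available at the boundary of the domain of `Ψ`. -/
theorem strictDeriv {r K α : ℝ} (hα : 1 < α) (c : ℝ) :
    HasStrictDerivAt (fun x : ℝ => r * x + K * x ^ α) (r + α * K * c ^ (α - 1)) c := by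
  have h1 : ContDiff ℝ 1 (fun x : ℝ => r * x + K * x ^ α) := by
    have := Real.contDiff_rpow_const_of_le (p := α) (n := 1) (by simpa using hα.le)
    have h2 : ContDiff ℝ 1 (fun x : ℝ => x ^ α) := by exact_mod_cast this
    fun_prop
  have h3 : HasDerivAt (fun x : ℝ => r * x + K * x ^ α) (r + α * K * c ^ (α - 1)) c := by
    have := ((hasDerivAt_id c).const_mul r).add
      ((Real.hasDerivAt_rpow_const (x := c) (Or.inr hα.le)).const_mul K)
    refine this.congr_deriv ?_
    ring
  exact h1.contDiffAt.hasStrictDerivAt' h3 one_ne_zero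

/-- Difference quotients of a strictly differentiable function, over pairs of distinct points both
tending to `c`, tend to the derivative at `c`. -/
theorem tendsto_diff_quot {ι : Type*} {l : Filter ι} {f : ℝ → ℝ} {d c : ℝ} {a b : ι → ℝ}
    (hf : HasStrictDerivAt f d c) (ha : Tendsto a l (nhds c)) (hb : Tendsto b l (nhds c))
    (hab : ∀ i, a i ≠ b i) :
    Tendsto (fun i => (f (a i) - f (b i)) / (a i - b i)) l (nhds d) := by
  have h := (hf.isLittleO.comp_tendsto (ha.prodMk_nhds hb)).tendsto_div_nhds_zero
  have h2 := h.add_const d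
  rw [zero_add] at h2
  refine h2.congr fun i => ?_
  have := sub_ne_zero.2 (hab i)
  simp
  field_simp
  ring

/-- If `ω(s) → ω*` as `s → ∞` with `𝒜(ω(s)) ≠ 0` for all `s` and
`𝒜(ω*) = 0`, then `𝒞(ω(s))/𝒜(ω(s)) → 1/(𝔯_q + αC p̂_q^α h(ω*)^{α−1})`, a limit in `(0,∞)`. -/
theorem C_over_A_limit
    (n q Q : ℕ) (hq : 1 ≤ q) (hqQ : q ≤ Q) (hQn : Q ≤ n)
    (anc : ℕ → ℕ)
    (hanc1 : anc 1 = 0) (hanc : ∀ j ∈ Finset.Icc 2 n, anc j < j)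
    (S : ℕ → Finset ℕ)
    (hS : ∀ j, S j = insert j ((Finset.Icc (j + 1) n).filter fun i => anc i < j))
    (phat rfrak : ℕ → ℝ)
    (hphatpos : ∀ j ∈ Finset.Icc 1 n, 0 < phat j)
    (hrfpos : ∀ l ∈ Finset.Icc q Q, 0 < rfrak l)
    (hmono : ∀ l ∈ Finset.Icc (q + 1) Q, rfrak (l - 1) / phat (l - 1) ≥ rfrak l / phat l)
    (α C : ℝ) (hα : 1 < α) (hC : 0 < C)
    (Ψ Ψinv : ℝ → ℝ)
    (hΨ : ∀ s, 0 ≤ s → Ψ s = rfrak q * s + C * phat q ^ α * s ^ α)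
    (hΨinv_right : ∀ x, 0 ≤ x → Ψ (Ψinv x) = x)
    (hΨinv_left : ∀ s, 0 ≤ s → Ψinv (Ψ s) = s)
    (hΨinv_nonneg : ∀ x, 0 ≤ x → 0 ≤ Ψinv x)
    (F hfun 𝒞 𝒜 : (ℕ → ℝ) → ℝ)
    (hF : ∀ w : ℕ → ℝ, F w = ∑ l ∈ Finset.Icc (q + 1) Q,
        (rfrak (l - 1) / phat (l - 1) - rfrak l / phat l)
          * ∑ i ∈ S l ∩ Finset.Icc q Q, phat i * w i)
    (hhfun : ∀ w : ℕ → ℝ, hfun w = (1 / phat q) * ∑ l ∈ S q ∩ Finset.Icc q Q, phat l * w l)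
    (h𝒞 : ∀ w : ℕ → ℝ, 𝒞 w = Ψinv (F w) - hfun w)
    (h𝒜 : ∀ w : ℕ → ℝ, 𝒜 w = F w - Ψ (hfun w))
    (ω : ℝ → ℕ → ℝ) (hωnn : ∀ s i, 0 ≤ ω s i)
    (ωstar : ℕ → ℝ) (hωstarnn : ∀ i, 0 ≤ ωstar i)
    (hωt : ∀ i, Tendsto (fun s => ω s i) atTop (nhds (ωstar i)))
    (hAne : ∀ s : ℝ, 𝒜 (ω s) ≠ 0)
    (hAzero : 𝒜 ωstar = 0) :
    Tendsto (fun s => 𝒞 (ω s) / 𝒜 (ω s)) atTop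
        (nhds (1 / (rfrak q + α * C * phat q ^ α * hfun ωstar ^ (α - 1)))) ∧
      0 < 1 / (rfrak q + α * C * phat q ^ α * hfun ωstar ^ (α - 1)) := by
  have hpq : 0 < phat q := hphatpos q (Finset.mem_Icc.2 ⟨hq, hqQ.trans hQn⟩)
  have hr : 0 < rfrak q := hrfpos q (Finset.mem_Icc.2 ⟨le_rfl, hqQ⟩)
  have hph : ∀ i ∈ Finset.Icc q Q, 0 < phat i := fun i hi => by
    rw [Finset.mem_Icc] at hi
    exact hphatpos i (Finset.mem_Icc.2 ⟨hq.trans hi.1, hi.2.trans hQn⟩)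
  have hK : 0 < C * phat q ^ α := mul_pos hC (Real.rpow_pos_of_pos hpq _)
  have hsum : ∀ (T : Finset ℕ) (w : ℕ → ℝ), (∀ i, 0 ≤ w i) →
      0 ≤ ∑ i ∈ T ∩ Finset.Icc q Q, phat i * w i := fun T w hw =>
    Finset.sum_nonneg fun i hi =>
      mul_nonneg (hph i (Finset.mem_inter.1 hi).2).le (hw i)
  have hFnn : ∀ w : ℕ → ℝ, (∀ i, 0 ≤ w i) → 0 ≤ F w := fun w hw => by
    rw [hF]
    exact Finset.sum_nonneg fun l hl => mul_nonneg (sub_nonneg.2 (hmono l hl)) (hsum _ w hw)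
  have hhnn : ∀ w : ℕ → ℝ, (∀ i, 0 ≤ w i) → 0 ≤ hfun w := fun w hw => by
    rw [hhfun]
    exact mul_nonneg (by positivity) (hsum _ w hw)
  have hFt : Tendsto (fun s => F (ω s)) atTop (nhds (F ωstar)) := by
    simp only [hF]
    exact tendsto_finsetSum _ fun l _ => (tendsto_finsetSum _ fun i _ =>
      (hωt i).const_mul _).const_mul _
  have hht : Tendsto (fun s => hfun (ω s)) atTop (nhds (hfun ωstar)) := by
    simp only [hhfun]
    exact (tendsto_finsetSum _ fun i _ => (hωt i).const_mul _).const_mul _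
  have hc := hhnn ωstar hωstarnn
  have hb := fun s => hhnn (ω s) (hωnn s)
  have ha := fun s => hΨinv_nonneg _ (hFnn (ω s) (hωnn s))
  have hΨa := fun s => hΨinv_right _ (hFnn (ω s) (hωnn s))
  have hFstar : F ωstar = Ψ (hfun ωstar) := by
    rw [h𝒜] at hAzero
    exact sub_eq_zero.1 hAzero
  have hat : Tendsto (fun s => Ψinv (F (ω s))) atTop (nhds (hfun ωstar)) := by
    rw [tendsto_iff_dist_tendsto_zero]
    have h1 : Tendsto (fun s => |F (ω s) - F ωstar| / rfrak q) atTop (nhds 0) := by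
      simpa using ((hFt.sub_const (F ωstar)).abs).div_const (rfrak q)
    refine squeeze_zero (fun _ => dist_nonneg) (fun s => ?_) h1
    rw [Real.dist_eq, le_div_iff₀ hr, mul_comm, hFstar]
    have h2 := expanding (r := rfrak q) hK.le (by linarith : 0 ≤ α) (ha s) hc
    rwa [← hΨ _ (ha s), ← hΨ _ hc, hΨa s] at h2
  have hAeq : ∀ s, 𝒜 (ω s) = Ψ (Ψinv (F (ω s))) - Ψ (hfun (ω s)) := fun s => by
    rw [h𝒜, hΨa s]
  have hab : ∀ s, Ψinv (F (ω s)) ≠ hfun (ω s) := fun s h => hAne s (by rw [hAeq, h, sub_self])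
  have hd : 0 < rfrak q + α * C * phat q ^ α * hfun ωstar ^ (α - 1) := by positivity
  refine ⟨?_, one_div_pos.2 hd⟩
  have hlim := tendsto_diff_quot
    (strictDeriv (r := rfrak q) (K := C * phat q ^ α) hα (hfun ωstar)) hat hht hab
  rw [← mul_assoc α C] at hlim
  rw [one_div]
  refine (hlim.inv₀ hd.ne').congr fun s => ?_
  rw [inv_div, h𝒞, hAeq, hΨ _ (ha s), hΨ _ (hb s)]
end

section
/- Suppose ρ(u) → ∞ and r(u)/ρ(u) → 𝔯 as u → ∞ for some 𝔯 > 0, and let φ : (0,∞) → [0,∞) satisfy r(u)·φ(u) + ℓ(p·φ(u)) = κ(u), where κ : (0,∞) → [0,∞) satisfies κ(u)/ρ(u)^{αβ} → f for some f ≥ 0. Then φ(u)/ρ(u)^β → g as u → ∞, where g is the unique nonnegative solution of 𝔯·g + C·p^α·g^α = f. -/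
/-!
Rescaling by `x = φ / ρ ^ β` turns the equation into `L u (x u) = κ u / ρ u ^ (α * β)`, where
`L u c = (r u / ρ u) * c + ℓ (p * (c * ρ u ^ β)) / ρ u ^ (α * β)`. For each fixed `c > 0`,
`L u c` converges to `F c = 𝔯 * c + C * p ^ α * c ^ α` (`tendsto_rescaled_exponent`), and `F` is
strictly increasing. Since `L u` is nondecreasing on `[0, ∞)` and `L u (x u) → f = F g`, any `c > g` satisfies
`L u (x u) < L u c`, hence `x u < c`, eventually; likewise `x u > c` eventually when `0 < c < g`.
Thus only the pointwise limit of `L` is used.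
-/

open Filter

/-- Pointwise limit of the rescaled Lévy exponent. The argument `p * (c * ρ u ^ β)` must tend to
infinity for the asymptotics of `ℓ` to apply, hence `0 < c`. -/
lemma tendsto_rescaled_exponent {α β C p c : ℝ} (hβ : 0 < β) (hp : 0 < p) (hc : 0 < c)
    {ℓ ρ : ℝ → ℝ} (hℓ : Tendsto (fun s => ℓ s / s ^ α) atTop (nhds C))
    (hρ : ∀ u, 0 < u → 0 < ρ u) (hρt : Tendsto ρ atTop atTop) :
    Tendsto (fun u => ℓ (p * (c * ρ u ^ β)) / ρ u ^ (α * β)) atTop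
      (nhds (C * p ^ α * c ^ α)) := by
  have hs : Tendsto (fun u => p * (c * ρ u ^ β)) atTop atTop :=
    (((tendsto_rpow_atTop hβ).comp hρt).const_mul_atTop hc).const_mul_atTop hp
  have h := (hℓ.comp hs).mul_const (p ^ α * c ^ α)
  rw [← mul_assoc] at h
  refine h.congr' ?_
  filter_upwards [eventually_gt_atTop 0] with u hu
  have hρu := hρ u hu
  have h1 : (p * (c * ρ u ^ β)) ^ α = p ^ α * c ^ α * ρ u ^ (α * β) := by
    rw [Real.mul_rpow hp.le (by positivity), Real.mul_rpow hc.le (by positivity),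
      ← Real.rpow_mul hρu.le, mul_comm β α, mul_assoc]
  simp only [Function.comp_apply, h1]
  have := Real.rpow_pos_of_pos hp α
  have := Real.rpow_pos_of_pos hc α
  have := Real.rpow_pos_of_pos hρu (α * β)
  field_simp

/-- Light-traffic inversion step within an equivalence class:
if `ρ(u) → ∞`, `r(u)/ρ(u) → 𝔯 > 0`, `r(u)·φ(u) + ℓ(p·φ(u)) = κ(u)` with
`κ(u)/ρ(u)^{αβ} → f ≥ 0`, then `φ(u)/ρ(u)^β → g`, the unique nonnegative solution
of `𝔯·g + C·p^α·g^α = f`. -/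
theorem light_traffic_inversion_same_class
    (α β C p : ℝ) (hα : 1 < α) (hβ : β = 1 / (α - 1)) (hC : 0 < C) (hp : 0 < p)
    (ℓ : ℝ → ℝ) (hℓmono : MonotoneOn ℓ (Set.Ici 0)) (hℓnn : ∀ s, 0 ≤ s → 0 ≤ ℓ s)
    (hℓasymp : Tendsto (fun s => ℓ s / s ^ α) atTop (nhds C))
    (r ρ : ℝ → ℝ) (hr : ∀ u, 0 < u → 0 < r u) (hρ : ∀ u, 0 < u → 0 < ρ u)
    (hρt : Tendsto ρ atTop atTop)
    (𝔯 : ℝ) (h𝔯 : 0 < 𝔯)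
    (hrρ : Tendsto (fun u => r u / ρ u) atTop (nhds 𝔯))
    (φ κ : ℝ → ℝ) (hφnn : ∀ u, 0 < u → 0 ≤ φ u) (hκnn : ∀ u, 0 < u → 0 ≤ κ u)
    (heq : ∀ u, 0 < u → r u * φ u + ℓ (p * φ u) = κ u)
    (f : ℝ) (hf : 0 ≤ f)
    (hκt : Tendsto (fun u => κ u / ρ u ^ (α * β)) atTop (nhds f))
    (g : ℝ) (hg : 0 ≤ g) (hgeq : 𝔯 * g + C * p ^ α * g ^ α = f)
    (hguniq : ∀ g' : ℝ, 0 ≤ g' → 𝔯 * g' + C * p ^ α * g' ^ α = f → g' = g) :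
    Tendsto (fun u => φ u / ρ u ^ β) atTop (nhds g) := by
  have hβpos : 0 < β := by
    rw [hβ]
    exact one_div_pos.2 (by linarith)
  have hαβ : α * β = 1 + β := by
    rw [hβ]
    have : α - 1 ≠ 0 := by linarith
    field_simp
    ring
  let L : ℝ → ℝ → ℝ := fun u c => r u / ρ u * c + ℓ (p * (c * ρ u ^ β)) / ρ u ^ (α * β)
  let F : ℝ → ℝ := fun c => 𝔯 * c + C * p ^ α * c ^ α
  have hL : ∀ c, 0 < c → Tendsto (fun u => L u c) atTop (nhds (F c)) := fun c hc =>
    (hrρ.mul_const c).add (tendsto_rescaled_exponent hβpos hp hc hℓasymp hρ hρt)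
  have hF : ∀ a b, 0 ≤ a → a < b → F a < F b := fun a b ha hab => by
    have h1 : a ^ α ≤ b ^ α := Real.rpow_le_rpow ha hab.le (by linarith)
    have h2 : 0 < C * p ^ α := mul_pos hC (Real.rpow_pos_of_pos hp α)
    exact add_lt_add_of_lt_of_le (mul_lt_mul_of_pos_left hab h𝔯)
      (mul_le_mul_of_nonneg_left h1 h2.le)
  have hLmono : ∀ u, 0 < u → ∀ a b, 0 ≤ a → a ≤ b → L u a ≤ L u b := fun u hu a b ha hab => by
    have hρu := hρ u hu
    have hru := hr u hu
    have hpow := Real.rpow_pos_of_pos hρu β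
    have hb : 0 ≤ b := ha.trans hab
    have h1 : ℓ (p * (a * ρ u ^ β)) ≤ ℓ (p * (b * ρ u ^ β)) :=
      hℓmono (Set.mem_Ici.2 (by positivity)) (Set.mem_Ici.2 (by positivity)) (by gcongr)
    exact add_le_add (by gcongr) (by gcongr)
  have hx : ∀ u, 0 < u → 0 ≤ φ u / ρ u ^ β := fun u hu =>
    div_nonneg (hφnn u hu) (Real.rpow_nonneg (hρ u hu).le β)
  have hLx : Tendsto (fun u => L u (φ u / ρ u ^ β)) atTop (nhds (F g)) := by
    change Tendsto _ _ (nhds (𝔯 * g + C * p ^ α * g ^ α))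
    rw [hgeq]
    refine hκt.congr' ?_
    filter_upwards [eventually_gt_atTop 0] with u hu
    have hρu := hρ u hu
    have hpow := Real.rpow_pos_of_pos hρu β
    have h1 : φ u / ρ u ^ β * ρ u ^ β = φ u := div_mul_cancel₀ _ hpow.ne'
    simp only [L, h1, ← heq u hu, hαβ, Real.rpow_add hρu, Real.rpow_one]
    field_simp
  rw [tendsto_order]
  constructor
  · intro c hc
    rcases lt_or_ge c 0 with hc0 | hc0
    · filter_upwards [eventually_gt_atTop 0] with u hu
      exact hc0.trans_le (hx u hu)
    · -- The midpoint is strictly positive even if `c = 0`, so `hL` applies to it.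
      have hd : 0 < (c + g) / 2 := by linarith
      filter_upwards [eventually_gt_atTop 0,
        (hL _ hd).eventually_lt hLx (hF _ g hd.le (by linarith))] with u hu hlt
      by_contra! hle
      exact absurd (hLmono u hu _ ((c + g) / 2) (hx u hu) (by linarith)) (not_le.2 hlt)
  · intro c hc
    filter_upwards [eventually_gt_atTop 0,
      hLx.eventually_lt (hL c (hg.trans_lt hc)) (hF g c hg hc)] with u hu hlt
    by_contra! hle
    exact absurd (hLmono u hu c _ (hg.trans hc.le) hle) (not_le.2 hlt)
end

section
/- Suppose ρ₂(u) → ∞, ρ₂(u)/ρ₁(u) → 0 and r(u)/ρ₁(u) → 𝔯 as u → ∞ for some 𝔯 > 0, and let φ : (0,∞) → [0,∞) satisfy r(u)·φ(u) + ℓ(p·φ(u)) = κ(u), where κ : (0,∞) → [0,∞) satisfies κ(u)/(ρ₁(u)·ρ₂(u)^β) → f for some f ≥ 0. Then φ(u)/ρ₂(u)^β → f/𝔯 as u → ∞. -/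
/-!
Divide the equation `r φ + ℓ(p φ) = κ` by `ρ₁ ρ₂ ^ β` and write `x = φ / ρ₂ ^ β`, so that
`(r / ρ₁) x + ℓ(p φ) / (ρ₁ ρ₂ ^ β) = κ / (ρ₁ ρ₂ ^ β) → f`. Both terms on the left are nonnegative and
`r / ρ₁ → 𝔯 > 0`, so `x` is eventually bounded, say by `M`. Monotonicity of `ℓ` and its
asymptotics then give
`ℓ(p φ) ≤ ℓ(p M ρ₂ ^ β) ~ C (p M) ^ α ρ₂ ^ (α β)`, and since `α β = 1 + β` the second term is
`O(ρ₂ / ρ₁)`, hence negligible. What remains is `(r / ρ₁) x → f`, i.e. `x → f / 𝔯`.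
-/

open Filter

/-- Light-traffic inversion step across a class boundary:
if `ρ₂(u) → ∞`, `ρ₂(u)/ρ₁(u) → 0`, `r(u)/ρ₁(u) → 𝔯 > 0`, and
`r(u)·φ(u) + ℓ(p·φ(u)) = κ(u)` with `κ(u)/(ρ₁(u)·ρ₂(u)^β) → f ≥ 0`,
then `φ(u)/ρ₂(u)^β → f/𝔯`. -/
theorem light_traffic_inversion_class_boundary
    (α β C p : ℝ) (hα : 1 < α) (hβ : β = 1 / (α - 1)) (hC : 0 < C) (hp : 0 < p)
    (ℓ : ℝ → ℝ) (hℓmono : MonotoneOn ℓ (Set.Ici 0)) (hℓnn : ∀ s, 0 ≤ s → 0 ≤ ℓ s)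
    (hℓasymp : Tendsto (fun s => ℓ s / s ^ α) atTop (nhds C))
    (r ρ₁ ρ₂ : ℝ → ℝ)
    (hr : ∀ u, 0 < u → 0 < r u) (hρ₁ : ∀ u, 0 < u → 0 < ρ₁ u) (hρ₂ : ∀ u, 0 < u → 0 < ρ₂ u)
    (hρ₂t : Tendsto ρ₂ atTop atTop)
    (hρratio : Tendsto (fun u => ρ₂ u / ρ₁ u) atTop (nhds 0))
    (𝔯 : ℝ) (h𝔯 : 0 < 𝔯)
    (hrρ : Tendsto (fun u => r u / ρ₁ u) atTop (nhds 𝔯))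
    (φ κ : ℝ → ℝ) (hφnn : ∀ u, 0 < u → 0 ≤ φ u) (hκnn : ∀ u, 0 < u → 0 ≤ κ u)
    (heq : ∀ u, 0 < u → r u * φ u + ℓ (p * φ u) = κ u)
    (f : ℝ) (hf : 0 ≤ f)
    (hκt : Tendsto (fun u => κ u / (ρ₁ u * ρ₂ u ^ β)) atTop (nhds f)) :
    Tendsto (fun u => φ u / ρ₂ u ^ β) atTop (nhds (f / 𝔯)) := by
  have hα1 : 0 < α - 1 := by linarith
  have hβpos : 0 < β := by rw [hβ]; positivity
  have hαβ : β * α = 1 + β := by rw [hβ]; field_simp; ring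
  have hpos : ∀ᶠ u : ℝ in atTop, 0 < u := eventually_gt_atTop 0
  have hpow : ∀ u, 0 < u → 0 < ρ₂ u ^ β := fun u hu => Real.rpow_pos_of_pos (hρ₂ u hu) β
  have hnorm : ∀ u, 0 < u → r u / ρ₁ u * (φ u / ρ₂ u ^ β)
      + ℓ (p * φ u) / (ρ₁ u * ρ₂ u ^ β) = κ u / (ρ₁ u * ρ₂ u ^ β) := by
    intro u hu
    rw [← heq u hu, div_mul_div_comm, ← add_div]
  -- `M` is the quotient of an eventual upper bound for `κ / (ρ₁ ρ₂ ^ β)`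
  -- by an eventual positive lower bound for `r / ρ₁`.
  obtain ⟨M, hM, hbound⟩ : ∃ M : ℝ, 0 < M ∧ ∀ᶠ u in atTop, φ u / ρ₂ u ^ β ≤ M := by
    refine ⟨(f + 1) / (𝔯 / 2), by positivity, ?_⟩
    filter_upwards [hpos, hrρ.eventually_const_le (half_lt_self h𝔯),
      hκt.eventually_le_const (lt_add_one f)] with u hu h1 h2
    have hx : 0 ≤ φ u / ρ₂ u ^ β := div_nonneg (hφnn u hu) (hpow u hu).le
    have hT : 0 ≤ ℓ (p * φ u) / (ρ₁ u * ρ₂ u ^ β) :=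
      div_nonneg (hℓnn _ (mul_nonneg hp.le (hφnn u hu))) (mul_pos (hρ₁ u hu) (hpow u hu)).le
    rw [le_div_iff₀ (by positivity)]
    have h3 := mul_le_mul_of_nonneg_right h1 hx
    linarith [hnorm u hu]
  have hpM : 0 < p * M := mul_pos hp hM
  have hs : Tendsto (fun u => p * M * ρ₂ u ^ β) atTop atTop :=
    ((tendsto_rpow_atTop hβpos).comp hρ₂t).const_mul_atTop hpM
  have hmajor : Tendsto (fun u => ℓ (p * M * ρ₂ u ^ β) / (p * M * ρ₂ u ^ β) ^ α
      * ((p * M) ^ α * (ρ₂ u / ρ₁ u))) atTop (nhds 0) := by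
    simpa using (hℓasymp.comp hs).mul (hρratio.const_mul ((p * M) ^ α))
  have hnegl : Tendsto (fun u => ℓ (p * φ u) / (ρ₁ u * ρ₂ u ^ β)) atTop (nhds 0) := by
    refine squeeze_zero' ?_ ?_ hmajor
    · filter_upwards [hpos] with u hu
      exact div_nonneg (hℓnn _ (mul_nonneg hp.le (hφnn u hu)))
        (mul_pos (hρ₁ u hu) (hpow u hu)).le
    · filter_upwards [hpos, hbound] with u hu hb
      have h1 := hpow u hu
      have h2 := hρ₁ u hu
      have h3 := hρ₂ u hu
      have hle : ℓ (p * φ u) ≤ ℓ (p * M * ρ₂ u ^ β) := by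
        refine hℓmono (mul_nonneg hp.le (hφnn u hu)) (mul_pos hpM h1).le ?_
        rw [mul_assoc]
        exact mul_le_mul_of_nonneg_left ((div_le_iff₀ h1).1 hb) hp.le
      have hsα : (p * M * ρ₂ u ^ β) ^ α = (p * M) ^ α * (ρ₂ u * ρ₂ u ^ β) := by
        rw [Real.mul_rpow hpM.le h1.le, ← Real.rpow_mul h3.le, hαβ, Real.rpow_add h3,
          Real.rpow_one]
      have hpMα : 0 < (p * M) ^ α := Real.rpow_pos_of_pos hpM α
      calc ℓ (p * φ u) / (ρ₁ u * ρ₂ u ^ β)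
          ≤ ℓ (p * M * ρ₂ u ^ β) / (ρ₁ u * ρ₂ u ^ β) := by gcongr
        _ = _ := by
          rw [hsα]
          generalize ℓ (p * M * ρ₂ u ^ β) = L
          field_simp
  have hmain := (hκt.sub hnegl).div hrρ h𝔯.ne'
  rw [sub_zero] at hmain
  refine hmain.congr' ?_
  filter_upwards [hpos] with u hu
  have hq : 0 < r u / ρ₁ u := div_pos (hr u hu) (hρ₁ u hu)
  rw [Pi.div_apply, div_eq_iff hq.ne']
  linarith [hnorm u hu]
end

section
/- Suppose ρ₂(u) → ∞, ρ₂(u)/ρ₁(u) → 0 and r(u)/ρ₁(u) → 𝔯 as u → ∞ for some 𝔯 > 0; let h : (0,∞) → [0,∞) satisfy h(u)/ρ₂(u)^β → H for some H > 0; and let φ : (0,∞) → [0,∞) satisfy r(u)·φ(u) + ℓ(p·φ(u)) = κ(u), where κ(u) − r(u)·h(u) = b·ρ₂(u)^{αβ} + o(ρ₂(u)^{αβ}) for some b ∈ ℝ and κ(u) ≥ 0. Then ρ₁(u)·(φ(u) − h(u))/ρ₂(u)^{αβ} → (b − C·p^α·H^α)/𝔯 as u → ∞. -/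
/-!
Write `Z = ρ₁ (φ - h) / ρ₂ ^ (αβ)` and `D = (κ - r h) / ρ₂ ^ (αβ)`. Dividing the equation for `φ`
by `ρ₂ ^ (αβ)` gives `(r / ρ₁) Z + ℓ (p φ) / ρ₂ ^ (αβ) = D`, where `r / ρ₁ → 𝔯` and `D → b`.
So it suffices that `ℓ (p φ) / ρ₂ ^ (αβ) → C p ^ α H ^ α`, and by the power law of `ℓ`
(`tendsto_exponent_scaled`) this follows from `φ / ρ₂ ^ β → H`.

For the latter, `αβ = 1 + β` yields
`(φ - h) / ρ₂ ^ β = (ρ₂ / ρ₁) (D - ℓ (p φ) / ρ₂ ^ (αβ)) / (r / ρ₁)`. Since `ℓ ≥ 0`, this is at most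
`(ρ₂ / ρ₁) D / (r / ρ₁) → 0`. Conversely, wherever `φ ≤ h`, monotonicity allows `ℓ (p φ)` to be
replaced by `ℓ (p h)`, whose scaled limit is known, so the negative part of `(φ - h) / ρ₂ ^ β`
also tends to `0`.
-/

open Filter

/-- If `ℓ s ~ C s ^ α` at infinity and `g` is asymptotic to `H ρ ^ β` with `ρ → ∞`, then
`ℓ (p g)` is asymptotic to `C (p H) ^ α ρ ^ (αβ)`. -/
lemma tendsto_exponent_scaled {α β C p H : ℝ} (hβ : 0 < β) (hp : 0 < p)
    (hH : 0 < H) {ℓ ρ g : ℝ → ℝ}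
    (hℓ : Tendsto (fun s => ℓ s / s ^ α) atTop (nhds C))
    (hρ : Tendsto ρ atTop atTop)
    (hg : Tendsto (fun u => g u / ρ u ^ β) atTop (nhds H)) :
    Tendsto (fun u => ℓ (p * g u) / ρ u ^ (α * β)) atTop (nhds (C * p ^ α * H ^ α)) := by
  have hρβ : Tendsto (fun u => ρ u ^ β) atTop atTop := (tendsto_rpow_atTop hβ).comp hρ
  have hgt : Tendsto g atTop atTop := by
    refine (hρβ.atTop_mul_pos hH hg).congr' ?_
    filter_upwards [hρβ.eventually_gt_atTop 0] with u hu
    field_simp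
  have h1 := hℓ.comp (hgt.const_mul_atTop hp)
  have h2 := hg.rpow_const (p := α) (Or.inl hH.ne')
  have h3 := (h1.mul_const (p ^ α)).mul h2
  refine h3.congr' ?_
  filter_upwards [hρ.eventually_gt_atTop 0, hgt.eventually_gt_atTop 0] with u hρu hgu
  have hX : ρ u ^ (α * β) = (ρ u ^ β) ^ α := by rw [mul_comm, Real.rpow_mul hρu.le]
  have hb : 0 < ρ u ^ β := Real.rpow_pos_of_pos hρu _
  have hpα : 0 < p ^ α := Real.rpow_pos_of_pos hp _
  have hgα : 0 < g u ^ α := Real.rpow_pos_of_pos hgu _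
  have hbα : 0 < (ρ u ^ β) ^ α := Real.rpow_pos_of_pos hb _
  simp only [Function.comp_apply]
  rw [hX, Real.mul_rpow hp.le hgu.le, Real.div_rpow hgu.le hb.le]
  field_simp

/-- Refined second-order expansion across a class boundary:
if `ρ₂(u) → ∞`, `ρ₂(u)/ρ₁(u) → 0`, `r(u)/ρ₁(u) → 𝔯 > 0`, `h(u)/ρ₂(u)^β → H > 0`,
and `r(u)·φ(u) + ℓ(p·φ(u)) = κ(u)` with `κ(u) − r(u)·h(u) = b·ρ₂(u)^{αβ} + o(ρ₂(u)^{αβ})`,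
then `ρ₁(u)·(φ(u) − h(u))/ρ₂(u)^{αβ} → (b − C·p^α·H^α)/𝔯`. -/
theorem light_traffic_second_order_boundary
    (α β C p : ℝ) (hα : 1 < α) (hβ : β = 1 / (α - 1)) (hC : 0 < C) (hp : 0 < p)
    (ℓ : ℝ → ℝ) (hℓmono : MonotoneOn ℓ (Set.Ici 0)) (hℓnn : ∀ s, 0 ≤ s → 0 ≤ ℓ s)
    (hℓasymp : Tendsto (fun s => ℓ s / s ^ α) atTop (nhds C))
    (r ρ₁ ρ₂ : ℝ → ℝ)
    (hr : ∀ u, 0 < u → 0 < r u) (hρ₁ : ∀ u, 0 < u → 0 < ρ₁ u) (hρ₂ : ∀ u, 0 < u → 0 < ρ₂ u)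
    (hρ₂t : Tendsto ρ₂ atTop atTop)
    (hρratio : Tendsto (fun u => ρ₂ u / ρ₁ u) atTop (nhds 0))
    (𝔯 : ℝ) (h𝔯 : 0 < 𝔯)
    (hrρ : Tendsto (fun u => r u / ρ₁ u) atTop (nhds 𝔯))
    (h : ℝ → ℝ) (hhnn : ∀ u, 0 < u → 0 ≤ h u)
    (H : ℝ) (hH : 0 < H)
    (hht : Tendsto (fun u => h u / ρ₂ u ^ β) atTop (nhds H))
    (φ κ : ℝ → ℝ) (hφnn : ∀ u, 0 < u → 0 ≤ φ u) (hκnn : ∀ u, 0 < u → 0 ≤ κ u)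
    (heq : ∀ u, 0 < u → r u * φ u + ℓ (p * φ u) = κ u)
    (b : ℝ)
    (hκexp : Tendsto (fun u => (κ u - r u * h u) / ρ₂ u ^ (α * β)) atTop (nhds b)) :
    Tendsto (fun u => ρ₁ u * (φ u - h u) / ρ₂ u ^ (α * β)) atTop
      (nhds ((b - C * p ^ α * H ^ α) / 𝔯)) := by
  have hβpos : 0 < β := by
    rw [hβ]
    exact one_div_pos.mpr (by linarith)
  have hαβ : α * β = 1 + β := by
    have : α - 1 ≠ 0 := by linarith
    rw [hβ]
    field_simp
    ring
  have hLh := tendsto_exponent_scaled hβpos hp hH hℓasymp hρ₂t hht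
  have hUp : Tendsto (fun u => ρ₂ u / ρ₁ u * ((κ u - r u * h u) / ρ₂ u ^ (α * β)) / (r u / ρ₁ u))
      atTop (nhds 0) := by
    have h1 := (hρratio.mul hκexp).div hrρ h𝔯.ne'
    rw [zero_mul, zero_div] at h1
    exact h1
  have hLow : Tendsto (fun u => min 0 (ρ₂ u / ρ₁ u * ((κ u - r u * h u) / ρ₂ u ^ (α * β)
      - ℓ (p * h u) / ρ₂ u ^ (α * β)) / (r u / ρ₁ u))) atTop (nhds 0) := by
    simpa using (tendsto_const_nhds (x := (0 : ℝ))).min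
      ((hρratio.mul (hκexp.sub hLh)).div hrρ h𝔯.ne')
  -- The common shape of both bounds, by `αβ = 1 + β`.
  have hcancel : ∀ u, 0 < u → ∀ a : ℝ,
      ρ₂ u / ρ₁ u * (a / ρ₂ u ^ (α * β)) / (r u / ρ₁ u) = a / r u / ρ₂ u ^ β := by
    intro u hu a
    have h1 := hρ₁ u hu
    have h2 := hρ₂ u hu
    have h3 := hr u hu
    have hb : 0 < ρ₂ u ^ β := Real.rpow_pos_of_pos h2 _
    rw [hαβ, Real.rpow_add h2, Real.rpow_one]
    field_simp
  have hdiff : Tendsto (fun u => (φ u - h u) / ρ₂ u ^ β) atTop (nhds 0) := by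
    refine tendsto_of_tendsto_of_tendsto_of_le_of_le' hLow hUp ?_ ?_
    · filter_upwards [eventually_gt_atTop 0] with u hu
      have hb : 0 < ρ₂ u ^ β := Real.rpow_pos_of_pos (hρ₂ u hu) _
      rcases le_total (h u) (φ u) with hle | hle
      · exact (min_le_left _ _).trans (div_nonneg (by linarith) hb.le)
      · refine (min_le_right _ _).trans ?_
        rw [← sub_div, hcancel u hu]
        have hφp : 0 ≤ p * φ u := mul_nonneg hp.le (hφnn u hu)
        have hhp : 0 ≤ p * h u := mul_nonneg hp.le (hhnn u hu)
        have hm : ℓ (p * φ u) ≤ ℓ (p * h u) :=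
          hℓmono hφp hhp (mul_le_mul_of_nonneg_left hle hp.le)
        refine div_le_div_of_nonneg_right ?_ hb.le
        rw [div_le_iff₀ (hr u hu)]
        linarith [heq u hu]
    · filter_upwards [eventually_gt_atTop 0] with u hu
      have hb : 0 < ρ₂ u ^ β := Real.rpow_pos_of_pos (hρ₂ u hu) _
      rw [hcancel u hu]
      refine div_le_div_of_nonneg_right ?_ hb.le
      rw [le_div_iff₀ (hr u hu)]
      linarith [heq u hu, hℓnn (p * φ u) (mul_nonneg hp.le (hφnn u hu))]
  have hφt : Tendsto (fun u => φ u / ρ₂ u ^ β) atTop (nhds H) := by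
    have h1 := hdiff.add hht
    rw [zero_add] at h1
    refine h1.congr fun u => ?_
    rw [← add_div, sub_add_cancel]
  have hLφ := tendsto_exponent_scaled hβpos hp hH hℓasymp hρ₂t hφt
  refine ((hκexp.sub hLφ).div hrρ h𝔯.ne').congr' ?_
  filter_upwards [eventually_gt_atTop 0] with u hu
  have h1 := hρ₁ u hu
  have h3 := hr u hu
  have hX : 0 < ρ₂ u ^ (α * β) := Real.rpow_pos_of_pos (hρ₂ u hu) _
  have hnum : κ u - r u * h u - ℓ (p * φ u) = r u * (φ u - h u) := by
    rw [← heq u hu]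
    ring
  simp only [Pi.div_apply]
  rw [← sub_div, hnum]
  field_simp
end

section
/- Suppose ρ(u) → 0 and r(u)/ρ(u) → 𝔯 as u → ∞ for some 𝔯 > 0, and let φ : (0,∞) → [0,∞) satisfy r(u)·φ(u) + ℓ(p·φ(u)) = κ(u), where κ : (0,∞) → [0,∞) satisfies κ(u)/ρ(u)^{αβ} → f for some f ≥ 0. Then φ(u)/ρ(u)^β → g as u → ∞, where g is the unique nonnegative solution of 𝔯·g + C·p^α·g^α = f. -/
/-!
Write `F u a = (r u / ρ u) * a + ℓ (p * a * ρ u ^ β) / ρ u ^ (α * β)`. Since `α * β = 1 + β`,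
dividing the defining equation by `ρ u ^ (α * β)` turns it into
`F u (φ u / ρ u ^ β) = κ u / ρ u ^ (α * β)`, whose right-hand side tends to `f`.
For fixed `a > 0` the asymptotics of `ℓ` at `0⁺` give `F u a → H a`, where
`H a = 𝔯 * a + C * p ^ α * a ^ α` (`tendsto_rescaled`). Both `F u` and `H` are increasing on
`[0, ∞)` and `H g = f`. Hence for `a < g < b` with `a` positive, `F u a < F u (φ u / ρ u ^ β) < F u b`
eventually, and monotonicity of `F u` yields `a < φ u / ρ u ^ β < b`. No inverse function, nor any
a priori bound on `φ`, is needed.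
-/

open Filter

/-- Pointwise limit of the rescaled equation at a fixed argument `a > 0`. -/
lemma tendsto_rescaled {α β C p : ℝ} (hβ : 0 < β) (hp : 0 < p) {ℓ : ℝ → ℝ}
    (hℓ : Tendsto (fun s => ℓ s / s ^ α) (nhdsWithin 0 (Set.Ioi 0)) (nhds C))
    {r ρ : ℝ → ℝ} (hρ : ∀ u, 0 < u → 0 < ρ u) (hρt : Tendsto ρ atTop (nhds 0))
    {c : ℝ} (hrρ : Tendsto (fun u => r u / ρ u) atTop (nhds c)) {a : ℝ} (ha : 0 < a) :
    Tendsto (fun u => r u / ρ u * a + ℓ (p * (a * ρ u ^ β)) / ρ u ^ (α * β)) atTop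
      (nhds (c * a + C * p ^ α * a ^ α)) := by
  have hpow : Tendsto (fun u => ρ u ^ β) atTop (nhds 0) := by
    have h := hρt.rpow_const (p := β) (Or.inr hβ.le)
    rwa [Real.zero_rpow hβ.ne'] at h
  have harg : Tendsto (fun u => p * (a * ρ u ^ β)) atTop (nhdsWithin 0 (Set.Ioi 0)) := by
    refine tendsto_nhdsWithin_iff.2 ⟨by simpa using (hpow.const_mul a).const_mul p, ?_⟩
    filter_upwards [eventually_gt_atTop 0] with u hu
    have := Real.rpow_pos_of_pos (hρ u hu) β
    exact Set.mem_Ioi.2 (by positivity)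
  have hmain := ((hℓ.comp harg).mul_const (p ^ α * a ^ α))
  refine (hrρ.mul_const a).add ?_
  rw [mul_assoc]
  refine hmain.congr' ?_
  filter_upwards [eventually_gt_atTop 0] with u hu
  have hρu := hρ u hu
  have h1 := Real.rpow_pos_of_pos hρu β
  have h2 := Real.rpow_pos_of_pos hρu (α * β)
  have h3 := Real.rpow_pos_of_pos hp α
  have h4 := Real.rpow_pos_of_pos ha α
  have h5 : (ρ u ^ β) ^ α = ρ u ^ (α * β) := by rw [← Real.rpow_mul hρu.le, mul_comm]
  simp only [Function.comp_apply]
  rw [Real.mul_rpow hp.le (by positivity), Real.mul_rpow ha.le h1.le, h5]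
  field_simp

/-- Heavy-traffic inversion step within an equivalence class:
if `ρ(u) → 0`, `r(u)/ρ(u) → 𝔯 > 0`, `r(u)·φ(u) + ℓ(p·φ(u)) = κ(u)` with
`κ(u)/ρ(u)^{αβ} → f ≥ 0` and `ℓ(s) = C·s^α + o(s^α)` as `s → 0⁺`, then
`φ(u)/ρ(u)^β → g`, the unique nonnegative solution of `𝔯·g + C·p^α·g^α = f`. -/
theorem heavy_traffic_inversion_same_class
    (α β C p : ℝ) (hα : 1 < α) (hβ : β = 1 / (α - 1)) (hC : 0 < C) (hp : 0 < p)
    (ℓ : ℝ → ℝ) (hℓmono : MonotoneOn ℓ (Set.Ici 0)) (hℓnn : ∀ s, 0 ≤ s → 0 ≤ ℓ s)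
    (hℓasymp : Tendsto (fun s => ℓ s / s ^ α) (nhdsWithin 0 (Set.Ioi 0)) (nhds C))
    (r ρ : ℝ → ℝ) (hr : ∀ u, 0 < u → 0 < r u) (hρ : ∀ u, 0 < u → 0 < ρ u)
    (hρt : Tendsto ρ atTop (nhds 0))
    (𝔯 : ℝ) (h𝔯 : 0 < 𝔯)
    (hrρ : Tendsto (fun u => r u / ρ u) atTop (nhds 𝔯))
    (φ κ : ℝ → ℝ) (hφnn : ∀ u, 0 < u → 0 ≤ φ u) (hκnn : ∀ u, 0 < u → 0 ≤ κ u)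
    (heq : ∀ u, 0 < u → r u * φ u + ℓ (p * φ u) = κ u)
    (f : ℝ) (hf : 0 ≤ f)
    (hκt : Tendsto (fun u => κ u / ρ u ^ (α * β)) atTop (nhds f))
    (g : ℝ) (hg : 0 ≤ g) (hgeq : 𝔯 * g + C * p ^ α * g ^ α = f)
    (hguniq : ∀ g' : ℝ, 0 ≤ g' → 𝔯 * g' + C * p ^ α * g' ^ α = f → g' = g) :
    Tendsto (fun u => φ u / ρ u ^ β) atTop (nhds g) := by
  have hα1 : 0 < α - 1 := by linarith
  have hα0 : 0 < α := by linarith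
  have hβ0 : 0 < β := by rw [hβ]; positivity
  have hαβ : α * β = 1 + β := by rw [hβ]; field_simp; ring
  set F : ℝ → ℝ → ℝ := fun u a =>
    r u / ρ u * a + ℓ (p * (a * ρ u ^ β)) / ρ u ^ (α * β) with hF
  have hFmono : ∀ u, 0 < u → ∀ a b, 0 ≤ a → a ≤ b → F u a ≤ F u b := by
    intro u hu a b ha hab
    have hρu := hρ u hu
    have hru := hr u hu
    have h1 := Real.rpow_pos_of_pos hρu β
    have h2 := Real.rpow_pos_of_pos hρu (α * β)
    have hb : 0 ≤ b := ha.trans hab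
    have hl : ℓ (p * (a * ρ u ^ β)) ≤ ℓ (p * (b * ρ u ^ β)) :=
      hℓmono (Set.mem_Ici.2 (by positivity)) (Set.mem_Ici.2 (by positivity)) (by gcongr)
    simp only [hF]
    gcongr
  have hFφ : ∀ u, 0 < u → F u (φ u / ρ u ^ β) = κ u / ρ u ^ (α * β) := by
    intro u hu
    have hρu := hρ u hu
    have h1 := Real.rpow_pos_of_pos hρu β
    have h2 : ρ u ^ (α * β) = ρ u * ρ u ^ β := by
      rw [hαβ, Real.rpow_add hρu, Real.rpow_one]
    simp only [hF]
    rw [div_mul_cancel₀ _ h1.ne', h2, ← heq u hu]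
    field_simp
  have hFφt : Tendsto (fun u => F u (φ u / ρ u ^ β)) atTop (nhds f) := by
    refine hκt.congr' ?_
    filter_upwards [eventually_gt_atTop 0] with u hu
    exact (hFφ u hu).symm
  have hlim : ∀ a, 0 < a → Tendsto (fun u => F u a) atTop
      (nhds (𝔯 * a + C * p ^ α * a ^ α)) :=
    fun a ha => tendsto_rescaled hβ0 hp hℓasymp hρ hρt hrρ ha
  have hHmono : ∀ a b, 0 ≤ a → a < b →
      𝔯 * a + C * p ^ α * a ^ α < 𝔯 * b + C * p ^ α * b ^ α := by
    intro a b ha hab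
    have h3 := Real.rpow_pos_of_pos hp α
    have h4 := Real.rpow_lt_rpow ha hab hα0
    gcongr
  have hnn : ∀ u, 0 < u → 0 ≤ φ u / ρ u ^ β := fun u hu =>
    div_nonneg (hφnn u hu) (Real.rpow_nonneg (hρ u hu).le β)
  refine tendsto_order.2 ⟨fun a ha => ?_, fun b hb => ?_⟩
  · rcases hg.eq_or_lt with hg0 | hg0
    · filter_upwards [eventually_gt_atTop 0] with u hu
      exact (ha.trans_eq hg0.symm).trans_le (hnn u hu)
    · -- `a` may be nonpositive; compare with a positive `a'` strictly between `a` and `g`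
      obtain ⟨a', ha', ha'g⟩ := exists_between (max_lt ha hg0)
      have ha'0 : 0 < a' := (le_max_right _ _).trans_lt ha'
      have hlt : 𝔯 * a' + C * p ^ α * a' ^ α < f := hgeq ▸ hHmono a' g ha'0.le ha'g
      filter_upwards [eventually_gt_atTop 0, (hlim a' ha'0).eventually_lt hFφt hlt] with u hu h
      refine ((le_max_left _ _).trans_lt ha').trans (lt_of_not_ge fun hle => ?_)
      exact absurd (hFmono u hu _ _ (hnn u hu) hle) (not_le.2 h)
  · have hb0 : 0 < b := hg.trans_lt hb
    have hlt : f < 𝔯 * b + C * p ^ α * b ^ α := hgeq ▸ hHmono g b hg hb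
    filter_upwards [eventually_gt_atTop 0, hFφt.eventually_lt (hlim b hb0) hlt] with u hu h
    refine lt_of_not_ge fun hle => ?_
    exact absurd (hFmono u hu _ _ hb0.le hle) (not_le.2 h)
end
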